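/- Under the interpolation setting, fix a step t, weights w_{i,t} ≥ 0 with Σ_{i=1}^M w_{i,t} = 1, momentum parameters λ_t ≥ 0 and λ_{t+1} = λ_t + 1/2, and step size 0 < η ≤ 1/(4ML·max_i w_{i,t}). Let z^t = (1 + λ_t)·θ^t − λ_t·θ^{t−1} and z^{t+1} = z^t − η·Σ_{i=1}^M w_{i,t} ∇f_i(θ^t). Then ‖z^{t+1} − θ*‖² ≤ ‖z^t − θ*‖² − 2ηλ_{t+1}·(f(θ^t) − f(θ*)) + 2ηλ_t·(f(θ^{t−1}) − f(θ*)) + η·δ^t + 2ηλ_t·μ_t, where δ^t = Σ_{i=1}^M (1/M − w_{i,t})·(f_i(θ^t) − f_i(θ*)) and μ_t = Σ_{i=1}^M (1/M − w_{i,t})·(f_i(θ^t) − f_i(θ^{t−1})). -/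

import Mathlib

open scoped InnerProductSpace BigOperators

/-!
The weighted objective `F = ∑ i, w i * f i` is again convex with `L`-Lipschitz gradient
`G = ∑ i, w i • ∇f i`, and `θstar` minimizes it, so the whole estimate reduces to one heavy-ball
step on the single function `F`. Expanding the square at `z = θ + λ (θ - θ')` leaves two inner
products with `G θ`, bounded below by convexity, and the term `η² ‖G θ‖²`. The latter is at most
`η (F θ - F θstar)`, because a gradient step of length `2η` already decreases `F` by `η ‖G θ‖²`.
Replacing the weights `w` by any other family is then an exact identity, whose correction terms are
`δ` and `μ`.
-/

open scoped NNReal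

section Weights

variable {ι : Type*} [Fintype ι]

lemma sum_le_card_mul_iSup (w : ι → ℝ) : ∑ i, w i ≤ Fintype.card ι * ⨆ i, w i := by
  simpa using Finset.sum_le_card_nsmul Finset.univ w (⨆ i, w i)
    fun i _ => le_ciSup (Set.finite_range w).bddAbove i

lemma mul_le_one_of_le_one_div_card_mul_iSup {w : ι → ℝ} (hw1 : ∑ i, w i = 1) {c η : ℝ}
    (hc : 0 < c) (hη : η ≤ 1 / (c * (Fintype.card ι * ⨆ i, w i))) : c * η ≤ 1 := by
  have one_le : 1 ≤ Fintype.card ι * ⨆ i, w i := hw1 ▸ sum_le_card_mul_iSup w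
  have hη' : η ≤ 1 / c :=
    hη.trans (one_div_le_one_div_of_le hc (le_mul_of_one_le_right hc.le one_le))
  rwa [le_div_iff₀' hc] at hη'

lemma sum_sub_mul_sub {R : Type*} [Ring R] (p w a b : ι → R) :
    ∑ i, (p i - w i) * (a i - b i) =
      (∑ i, p i * a i - ∑ i, p i * b i) - (∑ i, w i * a i - ∑ i, w i * b i) := by
  simp only [sub_mul, mul_sub, Finset.sum_sub_distrib]
  abel

lemma lipschitzWith_sum_smul {α F : Type*} [PseudoMetricSpace α] [SeminormedAddCommGroup F]
    [NormedSpace ℝ F] {w : ι → ℝ} (hw0 : ∀ i, 0 ≤ w i) (hw1 : ∑ i, w i = 1) {L : ℝ≥0}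
    {g : ι → α → F} (hg : ∀ i, LipschitzWith L (g i)) :
    LipschitzWith L fun x => ∑ i, w i • g i x := by
  refine LipschitzWith.of_dist_le_mul fun x y => ?_
  calc dist (∑ i, w i • g i x) (∑ i, w i • g i y)
      ≤ ∑ i, dist (w i • g i x) (w i • g i y) := dist_sum_sum_le _ _ _
    _ ≤ ∑ i, w i * (L * dist x y) := by
        gcongr with i
        rw [dist_smul₀, Real.norm_of_nonneg (hw0 i)]
        exact mul_le_mul_of_nonneg_left ((hg i).dist_le_mul x y) (hw0 i)
    _ = L * dist x y := by rw [← Finset.sum_mul, hw1, one_mul]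

end Weights

section HeavyBall

variable {E : Type*} [NormedAddCommGroup E] [InnerProductSpace ℝ E]

/-- `g` selects a subgradient of `f` at every point: the first-order form of convexity, through
which gradients enter the descent estimates. -/
def IsSubgradientField (f : E → ℝ) (g : E → E) : Prop :=
  ∀ x y, f x + ⟪g x, y - x⟫_ℝ ≤ f y

namespace IsSubgradientField

variable {f : E → ℝ} {g : E → E} {L : ℝ≥0} {η : ℝ}

lemma sub_le_inner (hg : IsSubgradientField f g) (x y : E) : f x - f y ≤ ⟪g x, x - y⟫_ℝ := by
  have h := hg x y
  rw [← neg_sub x y, inner_neg_right] at h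
  linarith

lemma sum_smul {ι : Type*} [Fintype ι] {w : ι → ℝ} (hw0 : ∀ i, 0 ≤ w i) {f : ι → E → ℝ}
    {g : ι → E → E} (hg : ∀ i, IsSubgradientField (f i) (g i)) :
    IsSubgradientField (fun x => ∑ i, w i * f i x) (fun x => ∑ i, w i • g i x) := fun x y => by
  simp only [sum_inner, real_inner_smul_left, ← Finset.sum_add_distrib, ← mul_add]
  exact Finset.sum_le_sum fun i _ => mul_le_mul_of_nonneg_left (hg i x y) (hw0 i)

lemma gradient_step_le (hg : IsSubgradientField f g) (hL : LipschitzWith L g) {s : ℝ} (hs : 0 ≤ s)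
    (x : E) : f (x - s • g x) + s * (1 - L * s) * ‖g x‖ ^ 2 ≤ f x := by
  set y := x - s • g x
  have hxy : x - y = s • g x := sub_sub_cancel _ _
  have hvariation : ⟪g x - g y, g x⟫_ℝ ≤ L * s * ‖g x‖ ^ 2 :=
    calc ⟪g x - g y, g x⟫_ℝ ≤ ‖g x - g y‖ * ‖g x‖ := real_inner_le_norm _ _
      _ ≤ L * ‖x - y‖ * ‖g x‖ := by gcongr; exact hL.norm_sub_le x y
      _ = L * s * ‖g x‖ ^ 2 := by rw [hxy, norm_smul, Real.norm_of_nonneg hs]; ring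
  have hinner : (1 - L * s) * ‖g x‖ ^ 2 ≤ ⟪g y, g x⟫_ℝ := by
    rw [inner_sub_left, real_inner_self_eq_norm_sq] at hvariation
    linarith
  calc f y + s * (1 - L * s) * ‖g x‖ ^ 2 ≤ f y + s * ⟪g y, g x⟫_ℝ := by rw [mul_assoc]; gcongr
    _ = f y + ⟪g y, x - y⟫_ℝ := by rw [hxy, real_inner_smul_right]
    _ ≤ f x := hg y x

lemma mul_norm_sq_le_sub (hg : IsSubgradientField f g) (hL : LipschitzWith L g) (hη0 : 0 ≤ η)
    (hη : 4 * L * η ≤ 1) {xmin : E} (hmin : ∀ x, f xmin ≤ f x) (x : E) :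
    η * ‖g x‖ ^ 2 ≤ f x - f xmin := by
  have hcoeff : η ≤ 2 * η * (1 - L * (2 * η)) := by
    linarith [mul_le_mul_of_nonneg_left hη hη0]
  calc η * ‖g x‖ ^ 2 ≤ 2 * η * (1 - L * (2 * η)) * ‖g x‖ ^ 2 := by gcongr
    _ ≤ f x - f (x - (2 * η) • g x) := by
        linarith [hg.gradient_step_le hL (mul_nonneg zero_le_two hη0) x]
    _ ≤ f x - f xmin := sub_le_sub_left (hmin _) _

end IsSubgradientField

lemma norm_momentum_step_sub_sq (lam η : ℝ) (θ θprev θstar v : E) :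
    ‖(1 + lam) • θ - lam • θprev - η • v - θstar‖ ^ 2 =
      ‖(1 + lam) • θ - lam • θprev - θstar‖ ^ 2 - 2 * η * ⟪v, θ - θstar⟫_ℝ
        - 2 * η * lam * ⟪v, θ - θprev⟫_ℝ + η ^ 2 * ‖v‖ ^ 2 := by
  have hz : (1 + lam) • θ - lam • θprev - θstar = (θ - θstar) + lam • (θ - θprev) := by module
  rw [sub_right_comm, norm_sub_sq_real, hz, real_inner_comm, real_inner_smul_left, inner_add_right,
    real_inner_smul_right, norm_smul, mul_pow, Real.norm_eq_abs, sq_abs]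
  ring

lemma IsSubgradientField.norm_momentum_step_sub_sq_le {f : E → ℝ} {g : E → E} {L : ℝ≥0}
    (hg : IsSubgradientField f g) (hL : LipschitzWith L g) {θstar : E}
    (hmin : ∀ x, f θstar ≤ f x) {lam η : ℝ} (hlam : 0 ≤ lam) (hη0 : 0 ≤ η) (hη : 4 * L * η ≤ 1)
    (θ θprev : E) :
    ‖(1 + lam) • θ - lam • θprev - η • g θ - θstar‖ ^ 2 ≤
      ‖(1 + lam) • θ - lam • θprev - θstar‖ ^ 2 - 2 * η * (lam + 1 / 2) * (f θ - f θstar)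
        + 2 * η * lam * (f θprev - f θstar) := by
  have hstar : η * (f θ - f θstar) ≤ η * ⟪g θ, θ - θstar⟫_ℝ := by
    gcongr
    exact hg.sub_le_inner θ θstar
  have hprev : η * lam * (f θ - f θprev) ≤ η * lam * ⟪g θ, θ - θprev⟫_ℝ := by
    gcongr
    exact hg.sub_le_inner θ θprev
  have hquad : η * (η * ‖g θ‖ ^ 2) ≤ η * (f θ - f θstar) := by
    gcongr
    exact hg.mul_norm_sq_le_sub hL hη0 hη hmin θ
  rw [norm_momentum_step_sub_sq]
  linarith

theorem stmt_10_general {ι : Type*} [Fintype ι] {L : ℝ≥0} {f : ι → E → ℝ} {g : ι → E → E}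
    (hg : ∀ i, IsSubgradientField (f i) (g i)) (hL : ∀ i, LipschitzWith L (g i))
    {w : ι → ℝ} (hw0 : ∀ i, 0 ≤ w i) (hw1 : ∑ i, w i = 1)
    {θstar : E} (hmin : ∀ x, ∑ i, w i * f i θstar ≤ ∑ i, w i * f i x)
    {lam η : ℝ} (hlam : 0 ≤ lam) (hη0 : 0 ≤ η) (hη : 4 * L * η ≤ 1)
    (p : ι → ℝ) (θ θprev : E) :
    ‖(1 + lam) • θ - lam • θprev - η • ∑ i, w i • g i θ - θstar‖ ^ 2
      ≤ ‖(1 + lam) • θ - lam • θprev - θstar‖ ^ 2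
        - 2 * η * (lam + 1 / 2) * (∑ i, p i * f i θ - ∑ i, p i * f i θstar)
        + 2 * η * lam * (∑ i, p i * f i θprev - ∑ i, p i * f i θstar)
        + η * ∑ i, (p i - w i) * (f i θ - f i θstar)
        + 2 * η * lam * ∑ i, (p i - w i) * (f i θ - f i θprev) := by
  have hstep := (IsSubgradientField.sum_smul hw0 hg).norm_momentum_step_sub_sq_le
    (lipschitzWith_sum_smul hw0 hw1 hL) hmin hlam hη0 hη θ θprev
  rw [sum_sub_mul_sub, sum_sub_mul_sub]
  linarith

end HeavyBall

/-- Per-step inequality for reweighted full-batch heavy-ball momentum under the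
interpolation regime, with `λ_{t+1} = λ_t + 1/2` and step size
`0 < η ≤ 1/(4ML·max_i w_i)`. -/
theorem stmt_10 {d M : ℕ} (hM : 0 < M) (L : ℝ) (hL : 0 < L)
    (f : Fin M → EuclideanSpace ℝ (Fin d) → ℝ)
    (hdiff : ∀ i, Differentiable ℝ (f i))
    (hconv : ∀ i, ∀ θ₁ θ₂ : EuclideanSpace ℝ (Fin d),
      f i θ₂ + ⟪gradient (f i) θ₂, θ₁ - θ₂⟫_ℝ ≤ f i θ₁)
    (hsmooth : ∀ i, ∀ θ θ' : EuclideanSpace ℝ (Fin d),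
      ‖gradient (f i) θ - gradient (f i) θ'‖ ≤ L * ‖θ - θ'‖)
    (θstar : EuclideanSpace ℝ (Fin d))
    (hinterp : ∀ i θ, f i θstar ≤ f i θ)
    (w : Fin M → ℝ)
    (hw0 : ∀ i, 0 ≤ w i)
    (hw1 : ∑ i, w i = 1)
    (lamt lamnext : ℝ) (hlamt : 0 ≤ lamt) (hlamnext : lamnext = lamt + 1 / 2)
    (η : ℝ) (hη0 : 0 < η)
    (hη1 : η ≤ 1 / (4 * (M : ℝ) * L * (⨆ i, w i)))
    (θt θprev zt znext : EuclideanSpace ℝ (Fin d))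
    (hz : zt = (1 + lamt) • θt - lamt • θprev)
    (hznext : znext = zt - η • ∑ i, w i • gradient (f i) θt) :
    ‖znext - θstar‖ ^ 2
      ≤ ‖zt - θstar‖ ^ 2
        - 2 * η * lamnext
            * ((1 / (M : ℝ)) * ∑ i, f i θt - (1 / (M : ℝ)) * ∑ i, f i θstar)
        + 2 * η * lamt
            * ((1 / (M : ℝ)) * ∑ i, f i θprev - (1 / (M : ℝ)) * ∑ i, f i θstar)
        + η * ∑ i, ((1 / (M : ℝ)) - w i) * (f i θt - f i θstar)
        + 2 * η * lamt * ∑ i, ((1 / (M : ℝ)) - w i) * (f i θt - f i θprev) := by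
  subst hznext hz hlamnext
  lift L to ℝ≥0 using hL.le
  have hη : 4 * L * η ≤ 1 := mul_le_one_of_le_one_div_card_mul_iSup hw1 (by positivity) <| by
    rwa [Fintype.card_fin, ← mul_assoc, mul_right_comm 4 (L : ℝ) (M : ℝ)]
  have hmin (θ) : ∑ i, w i * f i θstar ≤ ∑ i, w i * f i θ :=
    Finset.sum_le_sum fun i _ => mul_le_mul_of_nonneg_left (hinterp i θ) (hw0 i)
  simpa only [Finset.mul_sum] using
    stmt_10_general (g := fun i => gradient (f i)) (fun i x y => hconv i y x)
      (fun i => lipschitzWith_iff_norm_sub_le.2 (hsmooth i)) hw0 hw1 hmin hlamt hη0.le hη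
      (fun _ => 1 / (M : ℝ)) θt θprev
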